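/- Let S = ⋃_{k=1}^m Tₖ be a compact convex set, where each Tₖ = { x ∈ ℝⁿ : gᵏ₁(x) ≥ 0, …, gᵏ_{mₖ}(x) ≥ 0 } is defined by real polynomials gᵏᵢ. Suppose that for every u ∈ ∂S and every pair (k, i) with gᵏᵢ(u) = 0: (1) Tₖ has nonempty interior near u, i.e., for every δ > 0 there exists v ∈ B(u, δ) with gᵏⱼ(v) > 0 for all j = 1, …, mₖ; and (2) gᵏᵢ is either sos-concave or strictly quasi-concave at u. Then S is SDP representable. -/

import Mathlib

open MvPolynomial Metric Set Pointwise Filter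

noncomputable section

/-- `ℝⁿ` with the Euclidean norm. -/
abbrev Rn (n : ℕ) : Type := EuclideanSpace ℝ (Fin n)

/-- A set `S ⊆ ℝⁿ` is SDP representable if it is the projection of a spectrahedron:
there are symmetric matrices `A₀, A i, B j` with
`S = { x | ∃ u, A₀ + Σ xᵢ Aᵢ + Σ uⱼ Bⱼ ⪰ 0 }`. -/
def IsSDPRepresentable {n : ℕ} (S : Set (Rn n)) : Prop :=
  ∃ (N d : ℕ) (A₀ : Matrix (Fin d) (Fin d) ℝ)
    (A : Fin n → Matrix (Fin d) (Fin d) ℝ) (B : Fin N → Matrix (Fin d) (Fin d) ℝ),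
    A₀.IsSymm ∧ (∀ i, (A i).IsSymm) ∧ (∀ j, (B j).IsSymm) ∧
    S = {x : Rn n | ∃ u : Fin N → ℝ,
      (A₀ + ∑ i, x i • A i + ∑ j, u j • B j).PosSemidef}

/-- Evaluation of a polynomial at a point of `ℝⁿ`. -/
def peval {n : ℕ} (g : MvPolynomial (Fin n) ℝ) (x : Rn n) : ℝ :=
  MvPolynomial.eval (fun i => x i) g

/-- The gradient `∇g(u)` of a polynomial. -/
def pgrad {n : ℕ} (g : MvPolynomial (Fin n) ℝ) (u : Rn n) : Fin n → ℝ :=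
  fun i => MvPolynomial.eval (fun j => u j) (MvPolynomial.pderiv i g)

/-- The Hessian `∇²g(u)` of a polynomial. -/
def phess {n : ℕ} (g : MvPolynomial (Fin n) ℝ) (u : Rn n) : Matrix (Fin n) (Fin n) ℝ :=
  Matrix.of fun i j =>
    MvPolynomial.eval (fun k => u k) (MvPolynomial.pderiv i (MvPolynomial.pderiv j g))

/-- A polynomial `g` is sos-concave if `-∇²g(x) = W(x)ᵀ W(x)` for some
(possibly nonsquare) matrix polynomial `W`. -/
def SosConcave {n : ℕ} (g : MvPolynomial (Fin n) ℝ) : Prop :=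
  ∃ (k : ℕ) (W : Fin k → Fin n → MvPolynomial (Fin n) ℝ),
    ∀ i j, - MvPolynomial.pderiv i (MvPolynomial.pderiv j g) = ∑ l, W l i * W l j

/-- `g` is quasi-concave at `u` : `-vᵀ∇²g(u)v ≥ 0` for every `v` with `∇g(u)ᵀv = 0`. -/
def QuasiConcaveAt {n : ℕ} (g : MvPolynomial (Fin n) ℝ) (u : Rn n) : Prop :=
  ∀ v : Fin n → ℝ, (∑ i, pgrad g u i * v i) = 0 →
    0 ≤ -(∑ i, ∑ j, v i * phess g u i j * v j)

/-- `g` is strictly quasi-concave at `u` : if `∇g(u) ≠ 0` then `-vᵀ∇²g(u)v > 0`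
for all nonzero `v ⊥ ∇g(u)`; if `∇g(u) = 0` then `-∇²g(u)` is positive definite. -/
def StrictlyQuasiConcaveAt {n : ℕ} (g : MvPolynomial (Fin n) ℝ) (u : Rn n) : Prop :=
  (pgrad g u ≠ 0 ∧ ∀ v : Fin n → ℝ, v ≠ 0 → (∑ i, pgrad g u i * v i) = 0 →
      0 < -(∑ i, ∑ j, v i * phess g u i j * v j)) ∨
  (pgrad g u = 0 ∧ (-(phess g u)).PosDef)

/-- The convex boundary `∂_c T` : points of `T` minimizing some unit linear functional. -/
def convexBoundary {n : ℕ} (T : Set (Rn n)) : Set (Rn n) :=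
  {u ∈ T | ∃ l : Rn n, ‖l‖ = 1 ∧ ∀ x ∈ T, (∑ i, l i * u i) ≤ ∑ i, l i * x i}

/-- `v` is a nonsingular point of `∂T` (w.r.t. defining polynomials `g`):
exactly one defining polynomial vanishes at `v`, with nonvanishing gradient. -/
def IsNonsingularBoundaryPoint {n m : ℕ} (g : Fin m → MvPolynomial (Fin n) ℝ)
    (T : Set (Rn n)) (v : Rn n) : Prop :=
  v ∈ frontier T ∧ ∃ i, peval (g i) v = 0 ∧ pgrad (g i) v ≠ 0 ∧
    ∀ j, peval (g j) v = 0 → j = i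

/-- A polynomial is SOS if it is a finite sum of squares of polynomials. -/
def IsSOSPoly {n : ℕ} (p : MvPolynomial (Fin n) ℝ) : Prop :=
  ∃ (k : ℕ) (q : Fin k → MvPolynomial (Fin n) ℝ), p = ∑ i, (q i) ^ 2

/-- The polynomial `δ² - ‖x - u‖²`. -/
def ballPoly {n : ℕ} (u : Rn n) (δ : ℝ) : MvPolynomial (Fin n) ℝ :=
  MvPolynomial.C (δ ^ 2) - ∑ i, (MvPolynomial.X i - MvPolynomial.C (u i)) ^ 2

/-- The family `h₁, …, h_{m₂}` extended by the ball polynomial `h_m(x) = δ² - ‖x-u‖²`. -/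
def extFamily {n m2 : ℕ} (h : Fin m2 → MvPolynomial (Fin n) ℝ) (u : Rn n) (δ : ℝ) :
    Fin (m2 + 1) → MvPolynomial (Fin n) ℝ :=
  Fin.snoc h (ballPoly u δ)

/-- The positive definite Lagrange Hessian (PDLH) condition at `u` with radius `δu`,
for the set `T = {x | f(x) = 0, h(x) ≥ 0}`. -/
def PDLHAt {n m1 m2 : ℕ} (f : Fin m1 → MvPolynomial (Fin n) ℝ)
    (h : Fin m2 → MvPolynomial (Fin n) ℝ) (T : Set (Rn n)) (u : Rn n) (δu : ℝ) : Prop :=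
  ∀ l : Rn n, ‖l‖ = 1 → ∀ δ : ℝ, 0 < δ → δ ≤ δu →
    ∀ v ∈ T ∩ closedBall u δ,
      (∀ x ∈ T ∩ closedBall u δ, (∑ i, l i * v i) ≤ ∑ i, l i * x i) →
      ∃ (lam : Fin m1 → ℝ) (mu : Fin (m2 + 1) → ℝ),
        (∀ j, 0 ≤ mu j) ∧
        (∀ j, mu j * peval (extFamily h u δ j) v = 0) ∧
        (∀ i, l i = (∑ k, lam k * pgrad (f k) v i) +
            ∑ j, mu j * pgrad (extFamily h u δ j) v i) ∧
        ∀ x ∈ closedBall u δ,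
          (Matrix.of (fun i i' : Fin n =>
            -(∑ k, lam k * phess (f k) x i i') -
              ∑ j, mu j * phess (extFamily h u δ j) x i i')).PosDef

/-- `Z(g) ∩ ∂S` has strictly convex shape with respect to `S`. -/
def StrictlyConvexShape {n : ℕ} (g : MvPolynomial (Fin n) ℝ) (S : Set (Rn n)) : Prop :=
  ∃ Y U : Set (Rn n), IsOpen U ∧ Y = {x | peval g x = 0} ∩ U ∧
    {x | peval g x = 0} ∩ frontier S ⊆ Y ∧
    (∀ p ∈ closure Y, pgrad g p ≠ 0) ∧
    ∀ p ∈ closure Y,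
      (∃ ε : ℝ, (ε = 1 ∨ ε = -1) ∧
        ∀ q ∈ S ∪ closure Y, ε * (∑ i, pgrad g p i * (q i - p i)) ≤ 0) ∧
      ∀ q ∈ S ∪ closure Y, (∑ i, pgrad g p i * (q i - p i)) = 0 → q = p

/-! ### Homogeneous spectrahedral cones -/

/-- A homogeneous spectrahedral cone. -/
def LMI {V : Type} [AddCommGroup V] [Module ℝ V] (C : Set V) : Prop :=
  ∃ (ι : Type) (_ : Fintype ι) (M : V →ₗ[ℝ] Matrix ι ι ℝ),
    C = {z | ∀ w : ι → ℝ, 0 ≤ ∑ i, ∑ j, w i * w j * M z i j}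

section LMI
variable {V W : Type} [AddCommGroup V] [Module ℝ V] [AddCommGroup W] [Module ℝ W]

lemma LMI.comap {C : Set V} (hC : LMI C) (f : W →ₗ[ℝ] V) : LMI {z | f z ∈ C} := by
  obtain ⟨ι, hι, M, rfl⟩ := hC
  exact ⟨ι, hι, M.comp f, rfl⟩

lemma LMI.ray (f : V →ₗ[ℝ] ℝ) : LMI {z | 0 ≤ f z} := by
  refine ⟨Unit, inferInstance,
    { toFun := fun z => Matrix.of fun _ _ => f z
      map_add' := by intros; ext; simp
      map_smul' := by intros; ext; simp }, ?_⟩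
  ext z
  simp only [mem_ofPred_eq]
  constructor
  · intro h w
    have : 0 ≤ w () * w () * f z := mul_nonneg (mul_self_nonneg _) h
    simpa using this
  · intro h
    simpa using h (fun _ => 1)

lemma LMI.inter {C D : Set V} (hC : LMI C) (hD : LMI D) : LMI (C ∩ D) := by
  obtain ⟨ι, hι, M, rfl⟩ := hC
  obtain ⟨κ, hκ, N, rfl⟩ := hD
  refine ⟨ι ⊕ κ, inferInstance,
    { toFun := fun z => Matrix.fromBlocks (M z) 0 0 (N z)
      map_add' := by intro x y; simp [Matrix.fromBlocks_add]
      map_smul' := by intro c x; simp [Matrix.fromBlocks_smul] }, ?_⟩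
  ext z
  simp only [mem_inter_iff, mem_ofPred_eq, LinearMap.coe_mk, AddHom.coe_mk, Fintype.sum_sum_type,
    Matrix.fromBlocks_apply₁₁, Matrix.fromBlocks_apply₁₂, Matrix.fromBlocks_apply₂₁,
    Matrix.fromBlocks_apply₂₂, Matrix.zero_apply, mul_zero, Finset.sum_const_zero, add_zero,
    zero_add]
  constructor
  · rintro ⟨h1, h2⟩ w
    exact add_nonneg (h1 fun i => w (Sum.inl i)) (h2 fun i => w (Sum.inr i))
  · intro h
    constructor
    · intro w
      simpa using h (Sum.elim w 0)
    · intro w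
      simpa using h (Sum.elim 0 w)

lemma LMI.univ : LMI (Set.univ : Set V) := by
  simpa using LMI.ray (0 : V →ₗ[ℝ] ℝ)

lemma LMI.ker (f : V →ₗ[ℝ] ℝ) : LMI {z | f z = 0} := by
  have := (LMI.ray f).inter (LMI.ray (-f))
  convert this using 1
  ext z
  simp only [mem_ofPred_eq, mem_inter_iff, LinearMap.neg_apply]
  constructor
  · intro h; simp [h]
  · intro h; linarith [h.1, h.2]

lemma LMI.iInter {κ : Type} [Fintype κ] {C : κ → Set V} (h : ∀ k, LMI (C k)) :
    LMI (⋂ k, C k) := by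
  classical
  have : ∀ s : Finset κ, LMI (⋂ k ∈ s, C k) := by
    intro s
    induction s using Finset.induction_on with
    | empty => simpa using LMI.univ
    | insert a s ha ih =>
      rw [Finset.set_biInter_insert]
      exact (h a).inter ih
  simpa using this Finset.univ

lemma LMI.add_mem {C : Set V} (hC : LMI C) {x y : V} (hx : x ∈ C) (hy : y ∈ C) : x + y ∈ C := by
  obtain ⟨ι, hι, M, rfl⟩ := hC
  intro w
  have := add_nonneg (hx w) (hy w)
  simpa [mul_add, Finset.sum_add_distrib] using this

lemma LMI.smul_mem {C : Set V} (hC : LMI C) {x : V} (hx : x ∈ C) {c : ℝ} (hc : 0 ≤ c) :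
    c • x ∈ C := by
  obtain ⟨ι, hι, M, rfl⟩ := hC
  intro w
  have := mul_nonneg hc (hx w)
  simpa [Finset.mul_sum, mul_left_comm] using this

lemma LMI.zero_mem {C : Set V} (hC : LMI C) : (0 : V) ∈ C := by
  obtain ⟨ι, hι, M, rfl⟩ := hC
  intro w
  simp

end LMI

/-- Lifted representability with an arbitrary space of lifting variables. -/
def Lift {n : ℕ} (S : Set (Rn n)) : Prop :=
  ∃ (V : Type) (_ : AddCommGroup V) (_ : Module ℝ V) (C : Set (ℝ × Rn n × V)),
    LMI C ∧ S = {x | ∃ z, ((1 : ℝ), x, z) ∈ C}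

section Lift
variable {n : ℕ}

lemma Lift.inter {S T : Set (Rn n)} (hS : Lift S) (hT : Lift T) : Lift (S ∩ T) := by
  obtain ⟨V, _, _, C, hC, rfl⟩ := hS
  obtain ⟨W, _, _, D, hD, rfl⟩ := hT
  let f : (ℝ × Rn n × (V × W)) →ₗ[ℝ] (ℝ × Rn n × V) :=
    { toFun := fun p => (p.1, p.2.1, p.2.2.1)
      map_add' := by intros; rfl
      map_smul' := by intros; rfl }
  let g : (ℝ × Rn n × (V × W)) →ₗ[ℝ] (ℝ × Rn n × W) :=
    { toFun := fun p => (p.1, p.2.1, p.2.2.2)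
      map_add' := by intros; rfl
      map_smul' := by intros; rfl }
  refine ⟨V × W, inferInstance, inferInstance, _, (hC.comap f).inter (hD.comap g), ?_⟩
  ext x
  constructor
  · rintro ⟨⟨z, hz⟩, ⟨w, hw⟩⟩
    exact ⟨(z, w), hz, hw⟩
  · rintro ⟨⟨z, w⟩, hz, hw⟩
    exact ⟨⟨z, hz⟩, ⟨w, hw⟩⟩

lemma Lift.univ : Lift (Set.univ : Set (Rn n)) :=
  ⟨PUnit, inferInstance, inferInstance, Set.univ, LMI.univ, by simp⟩

lemma Lift.empty : Lift (∅ : Set (Rn n)) := by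
  refine ⟨PUnit, inferInstance, inferInstance, _,
    LMI.ray (-(LinearMap.fst ℝ ℝ (Rn n × PUnit))), ?_⟩
  ext x
  simp only [mem_empty_iff_false, false_iff, mem_ofPred_eq]
  rintro ⟨z, hz⟩
  simp at hz
  linarith

lemma Lift.iInter {κ : Type} [Fintype κ] {C : κ → Set (Rn n)} (h : ∀ k, Lift (C k)) :
    Lift (⋂ k, C k) := by
  classical
  have : ∀ s : Finset κ, Lift (⋂ k ∈ s, C k) := by
    intro s
    induction s using Finset.induction_on with
    | empty => simpa using Lift.univ
    | insert a s ha ih =>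
      rw [Finset.set_biInter_insert]
      exact (h a).inter ih
  simpa using this Finset.univ

lemma Lift.convex {S : Set (Rn n)} (hS : Lift S) : Convex ℝ S := by
  obtain ⟨V, _, _, C, hC, rfl⟩ := hS
  rintro x ⟨z, hz⟩ y ⟨w, hw⟩ a b ha hb hab
  refine ⟨a • z + b • w, ?_⟩
  have := hC.add_mem (hC.smul_mem hz ha) (hC.smul_mem hw hb)
  simpa [hab] using this

lemma recession {V : Type} [AddCommGroup V] [Module ℝ V] {C : Set (ℝ × Rn n × V)} (hC : LMI C)
    {S : Set (Rn n)} (hsub : {x | ∃ z, ((1 : ℝ), x, z) ∈ C} ⊆ S) (hS : Bornology.IsBounded S)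
    {p y : Rn n} {z0 z : V} (hp : ((1 : ℝ), p, z0) ∈ C) (hy : ((0 : ℝ), y, z) ∈ C) : y = 0 := by
  by_contra hne
  obtain ⟨R, hR⟩ := hS.exists_norm_le
  have hpos : 0 < ‖y‖ := norm_pos_iff.mpr hne
  have hpS : p ∈ S := hsub ⟨z0, hp⟩
  have hR0 : 0 ≤ R := (norm_nonneg _).trans (hR p hpS)
  set t := (2 * R + 1) / ‖y‖ with ht
  have ht0 : 0 ≤ t := by positivity
  have hmem : p + t • y ∈ S := by
    apply hsub
    refine ⟨z0 + t • z, ?_⟩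
    simpa using hC.add_mem hp (hC.smul_mem hy ht0)
  have h1 := hR _ hmem
  have h2 := hR _ hpS
  have h3 : ‖t • y‖ ≤ ‖p + t • y‖ + ‖p‖ := by
    have := norm_sub_le (p + t • y) p
    simpa using this
  have h4 : ‖t • y‖ = 2 * R + 1 := by
    rw [norm_smul, Real.norm_of_nonneg ht0, ht]
    field_simp
  linarith

lemma Lift.hull {A B S : Set (Rn n)} (hA : Lift A) (hB : Lift B) (hAS : A ⊆ S) (hBS : B ⊆ S)
    (hS : Bornology.IsBounded S) (hconv : Convex ℝ S) :
    ∃ C, Lift C ∧ C ⊆ S ∧ A ∪ B ⊆ C := by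
  rcases A.eq_empty_or_nonempty with rfl | ⟨p, hp⟩
  · exact ⟨B, hB, hBS, by simp⟩
  rcases B.eq_empty_or_nonempty with rfl | ⟨q, hq⟩
  · exact ⟨A, hA, hAS, by simp⟩
  obtain ⟨V, _, _, C, hC, rfl⟩ := hA
  obtain ⟨W, _, _, D, hD, rfl⟩ := hB
  obtain ⟨z0, hp⟩ := hp
  obtain ⟨w0, hq⟩ := hq
  let f : (ℝ × Rn n × (ℝ × Rn n × V × W)) →ₗ[ℝ] (ℝ × Rn n × V) :=
    { toFun := fun p => (p.2.2.1, p.2.2.2.1, p.2.2.2.2.1)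
      map_add' := by intros; rfl
      map_smul' := by intros; rfl }
  let g : (ℝ × Rn n × (ℝ × Rn n × V × W)) →ₗ[ℝ] (ℝ × Rn n × W) :=
    { toFun := fun p => (p.1 - p.2.2.1, p.2.1 - p.2.2.2.1, p.2.2.2.2.2)
      map_add' := by
        intro x y
        simp only [Prod.fst_add, Prod.snd_add, Prod.mk_add_mk]
        rw [add_sub_add_comm, add_sub_add_comm]
      map_smul' := by
        intro c x
        simp only [Prod.smul_fst, Prod.smul_snd, Prod.smul_mk, RingHom.id_apply]
        rw [smul_sub, smul_sub] }
  refine ⟨_, ⟨ℝ × Rn n × V × W, inferInstance, inferInstance, _,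
    ((hC.comap f).inter (hD.comap g)).inter
      ((LMI.ray ((LinearMap.fst ℝ ℝ _).comp f)).inter
       (LMI.ray ((LinearMap.fst ℝ ℝ _).comp g))), rfl⟩, ?_, ?_⟩
  · rintro x ⟨⟨l, y, z, w⟩, ⟨h1, h2⟩, h3, h4⟩
    change (l, y, z) ∈ C at h1
    change (1 - l, x - y, w) ∈ D at h2
    change 0 ≤ l at h3
    change 0 ≤ 1 - l at h4
    rcases h3.eq_or_lt with h0 | h0
    · subst h0
      have : y = 0 := recession hC hAS hS hp h1
      subst this
      exact hBS ⟨w, by simpa using h2⟩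
    rcases h4.eq_or_lt with h0' | h0'
    · have hl : l = 1 := by linarith
      subst hl
      have : x - y = 0 := recession hD hBS hS hq (by simpa using h2)
      have hxy : x = y := sub_eq_zero.mp this
      subst hxy
      exact hAS ⟨z, h1⟩
    · have ha : l⁻¹ • y ∈ S := hAS ⟨l⁻¹ • z, by
        have := hC.smul_mem h1 (inv_nonneg.mpr h3)
        simpa [h0.ne'] using this⟩
      have hb : (1 - l)⁻¹ • (x - y) ∈ S := hBS ⟨(1 - l)⁻¹ • w, by
        have := hD.smul_mem h2 (inv_nonneg.mpr h4)
        simpa only [Prod.smul_mk, smul_eq_mul, inv_mul_cancel₀ h0'.ne'] using this⟩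
      have := hconv ha hb h3 h4 (by ring)
      rw [smul_smul, smul_smul, mul_inv_cancel₀ h0.ne', mul_inv_cancel₀ h0'.ne'] at this
      simpa using this
  · rintro x (⟨z, hz⟩ | ⟨w, hw⟩)
    · refine ⟨(1, x, z, 0), ⟨hz, ?_⟩, ?_, ?_⟩
      · change (1 - 1, x - x, (0 : W)) ∈ D
        have := hD.zero_mem
        rw [sub_self, sub_self]
        exact this
      · change (0 : ℝ) ≤ 1
        norm_num
      · change (0 : ℝ) ≤ 1 - 1
        norm_num
    · refine ⟨(0, 0, 0, w), ⟨?_, ?_⟩, ?_, ?_⟩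
      · exact hC.zero_mem
      · change (1 - 0, x - 0, w) ∈ D
        rw [sub_zero, sub_zero]
        exact hw
      · exact le_refl (0 : ℝ)
      · change (0 : ℝ) ≤ 1 - 0
        norm_num

lemma Lift.iUnion {κ : Type} [Fintype κ] {C : κ → Set (Rn n)} {S : Set (Rn n)}
    (h : ∀ k, Lift (C k)) (hCS : ∀ k, C k ⊆ S)
    (hS : Bornology.IsBounded S) (hconv : Convex ℝ S) :
    ∃ D, Lift D ∧ D ⊆ S ∧ ∀ k, C k ⊆ D := by
  classical
  have : ∀ s : Finset κ, ∃ D, Lift D ∧ D ⊆ S ∧ ∀ k ∈ s, C k ⊆ D := by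
    intro s
    induction s using Finset.induction_on with
    | empty => exact ⟨∅, Lift.empty, by simp, by simp⟩
    | insert a s ha ih =>
      obtain ⟨D, hD, hDS, hk⟩ := ih
      obtain ⟨E, hE, hES, hsub⟩ := Lift.hull (h a) hD (hCS a) hDS hS hconv
      refine ⟨E, hE, hES, ?_⟩
      intro k hks
      rcases Finset.mem_insert.mp hks with rfl | hks
      · exact subset_union_left.trans hsub
      · exact (hk k hks).trans (subset_union_right.trans hsub)
  obtain ⟨D, h1, h2, h3⟩ := this Finset.univ
  exact ⟨D, h1, h2, fun k => h3 k (Finset.mem_univ k)⟩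

lemma Lift.isSDPRepresentable {S : Set (Rn n)} (hS : Lift S) : IsSDPRepresentable S := by
  classical
  obtain ⟨V, _, _, C, ⟨ι, _, M, rfl⟩, rfl⟩ := hS
  let d := Fintype.card ι
  let e : ι ≃ Fin d := Fintype.equivFin ι
  -- symmetrized and reindexed map
  let P : (ℝ × Rn n × V) →ₗ[ℝ] Matrix (Fin d) (Fin d) ℝ :=
    { toFun := fun z => Matrix.of fun i j =>
        (M z (e.symm i) (e.symm j) + M z (e.symm j) (e.symm i)) / 2
      map_add' := by intro x y; ext i j; simp; ring
      map_smul' := by intro c x; ext i j; simp; ring }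
  have hsymm : ∀ z, (P z).IsSymm := by
    intro z
    ext i j
    simp [P, add_comm]
  have hpsd : ∀ z, (P z).PosSemidef ↔ ∀ w : ι → ℝ, 0 ≤ ∑ i, ∑ j, w i * w j * M z i j := by
    intro z
    have key : ∀ w : ι → ℝ, ∑ i, ∑ j, w i * w j * M z i j
        = star (fun i => w (e.symm i)) ⬝ᵥ ((P z).mulVec fun i => w (e.symm i)) := by
      intro w
      have h1 : star (fun i => w (e.symm i)) ⬝ᵥ ((P z).mulVec fun i => w (e.symm i))
        = ∑ i, ∑ j, w i * w j * ((M z i j + M z j i) / 2) := by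
        simp only [dotProduct, Matrix.mulVec, P, LinearMap.coe_mk, AddHom.coe_mk, Matrix.of_apply,
          Pi.star_apply, star_trivial, Finset.mul_sum]
        rw [← e.symm.sum_comp]
        refine Finset.sum_congr rfl fun i _ => ?_
        rw [← e.symm.sum_comp (fun j => w (e.symm i) * w j *
          ((M z (e.symm i) j + M z j (e.symm i)) / 2))]
        refine Finset.sum_congr rfl fun j _ => ?_
        ring
      have h2 : ∑ i, ∑ j, w i * w j * M z i j = ∑ i, ∑ j, w i * w j * M z j i := by
        rw [Finset.sum_comm]
        refine Finset.sum_congr rfl fun i _ => Finset.sum_congr rfl fun j _ => ?_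
        ring
      have h3 : ∑ i, ∑ j, w i * w j * ((M z i j + M z j i) / 2)
          = (∑ i, ∑ j, w i * w j * M z i j + ∑ i, ∑ j, w i * w j * M z j i) / 2 := by
        rw [← Finset.sum_add_distrib, Finset.sum_div]
        refine Finset.sum_congr rfl fun i _ => ?_
        rw [← Finset.sum_add_distrib, Finset.sum_div]
        refine Finset.sum_congr rfl fun j _ => ?_
        ring
      rw [h1, h3, ← h2]
      ring
    rw [Matrix.posSemidef_iff_dotProduct_mulVec]
    constructor
    · rintro ⟨_, h⟩ w
      rw [key]
      exact h _
    · intro h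
      refine ⟨?_, ?_⟩
      · have := hsymm z
        rw [Matrix.IsHermitian, Matrix.conjTranspose_eq_transpose_of_trivial]
        exact this
      · intro x
        have := h (fun i => x (e i))
        rw [key] at this
        simpa using this
  let Q : V →ₗ[ℝ] Matrix (Fin d) (Fin d) ℝ :=
    P.comp ((LinearMap.inr ℝ ℝ (Rn n × V)).comp (LinearMap.inr ℝ (Rn n) V))
  let b := Module.finBasis ℝ (LinearMap.range Q)
  refine ⟨Module.finrank ℝ (LinearMap.range Q), d, P (1, 0, 0),
    fun i => P (0, EuclideanSpace.single i 1, 0), fun j => (b j : Matrix (Fin d) (Fin d) ℝ),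
    hsymm _, fun i => hsymm _, ?_, ?_⟩
  · intro j
    obtain ⟨z, hz⟩ := (b j).2
    change (b j : Matrix (Fin d) (Fin d) ℝ).IsSymm
    rw [← hz]
    exact hsymm _
  · have hx : ∀ x : Rn n, ∑ i, x i • P (0, EuclideanSpace.single i 1, 0) = P (0, x, 0) := by
      intro x
      simp_rw [← map_smul]
      rw [← map_sum]
      congr 1
      have hs : x = ∑ i, x i • EuclideanSpace.single i (1 : ℝ) := by
        ext j
        simp [Finset.sum_apply, Pi.single_apply]
      ext1
      · simp [Prod.fst_sum]
      ext1
      · simp only [Prod.snd_sum, Prod.fst_sum]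
        conv_rhs => rw [hs]
        simp
      · simp [Prod.snd_sum]
    ext x
    simp only [mem_ofPred_eq, hx, ← hpsd]
    have hdec : ∀ z, P (1, x, z) = P (1, 0, 0) + P (0, x, 0) + Q z := by
      intro z
      change _ = _ + _ + P (0, 0, z)
      rw [← map_add, ← map_add]
      simp
    constructor
    · rintro ⟨z, hz⟩
      refine ⟨b.repr ⟨Q z, LinearMap.mem_range_self Q z⟩, ?_⟩
      have := congrArg Subtype.val (b.sum_repr ⟨Q z, LinearMap.mem_range_self Q z⟩)
      rw [Submodule.coe_sum] at this
      simp only [Submodule.coe_smul] at this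
      rw [this, ← hdec]
      exact hz
    · rintro ⟨u, hu⟩
      have hmem : ∑ j, u j • (b j : Matrix (Fin d) (Fin d) ℝ) ∈ LinearMap.range Q :=
        Submodule.sum_mem _ fun j _ => Submodule.smul_mem _ _ (b j).2
      obtain ⟨z, hz⟩ := hmem
      refine ⟨z, ?_⟩
      rw [hdec, hz]
      exact hu

end Lift

/-! ### Quadratic modules attached to a ball -/

section Quad
variable {n : ℕ}

/-- The scalar quadratic module of the ball. -/
def Qc (u : Rn n) (δ : ℝ) : AddSubmonoid (MvPolynomial (Fin n) ℝ) :=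
  AddSubmonoid.closure ({h | ∃ p, h = p * p} ∪ {h | ∃ p, h = ballPoly u δ * (p * p)})

/-- The matrix quadratic module of the ball. -/
def Kc (u : Rn n) (δ : ℝ) : AddSubmonoid (Fin n → Fin n → MvPolynomial (Fin n) ℝ) :=
  AddSubmonoid.closure ({H | ∃ w : Fin n → MvPolynomial (Fin n) ℝ, H = fun i j => w i * w j} ∪
    {H | ∃ w : Fin n → MvPolynomial (Fin n) ℝ, H = fun i j => ballPoly u δ * (w i * w j)})

lemma Qc.sq_mem (u : Rn n) (δ : ℝ) (p : MvPolynomial (Fin n) ℝ) : p * p ∈ Qc u δ :=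
  AddSubmonoid.subset_closure (Or.inl ⟨p, rfl⟩)

lemma Qc.ball_mem (u : Rn n) (δ : ℝ) (p : MvPolynomial (Fin n) ℝ) :
    ballPoly u δ * (p * p) ∈ Qc u δ :=
  AddSubmonoid.subset_closure (Or.inr ⟨p, rfl⟩)

lemma Kc.sq_mem (u : Rn n) (δ : ℝ) (w : Fin n → MvPolynomial (Fin n) ℝ) :
    (fun i j => w i * w j) ∈ Kc u δ :=
  AddSubmonoid.subset_closure (Or.inl ⟨w, rfl⟩)

lemma Kc.ball_mem (u : Rn n) (δ : ℝ) (w : Fin n → MvPolynomial (Fin n) ℝ) :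
    (fun i j => ballPoly u δ * (w i * w j)) ∈ Kc u δ :=
  AddSubmonoid.subset_closure (Or.inr ⟨w, rfl⟩)

lemma C_eq_sq {c : ℝ} (hc : 0 ≤ c) :
    (C c : MvPolynomial (Fin n) ℝ) = C (√c) * C (√c) := by
  rw [← C_mul, Real.mul_self_sqrt hc]

lemma ballPoly_split (u : Rn n) {δ δ' : ℝ} (h0 : 0 ≤ δ') (h : δ' ≤ δ) :
    ballPoly u δ = ballPoly u δ' + C (√(δ ^ 2 - δ' ^ 2)) * C (√(δ ^ 2 - δ' ^ 2)) := by
  have hc : 0 ≤ δ ^ 2 - δ' ^ 2 := by nlinarith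
  rw [← C_eq_sq hc, ballPoly, ballPoly, C_sub]
  ring

lemma Qc.mono (u : Rn n) {δ δ' : ℝ} (h0 : 0 ≤ δ') (h : δ' ≤ δ) : Qc u δ ≤ Qc u δ' := by
  rw [Qc, AddSubmonoid.closure_le]
  rintro f (⟨p, rfl⟩ | ⟨p, rfl⟩)
  · exact Qc.sq_mem u δ' p
  · rw [ballPoly_split u h0 h, add_mul]
    refine add_mem (Qc.ball_mem u δ' p) ?_
    have := Qc.sq_mem u δ' (C (√(δ ^ 2 - δ' ^ 2)) * p)
    convert this using 1
    ring

lemma Kc.mono (u : Rn n) {δ δ' : ℝ} (h0 : 0 ≤ δ') (h : δ' ≤ δ) : Kc u δ ≤ Kc u δ' := by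
  rw [Kc, AddSubmonoid.closure_le]
  rintro f (⟨w, rfl⟩ | ⟨w, rfl⟩)
  · exact Kc.sq_mem u δ' w
  · rw [ballPoly_split u h0 h, SetLike.mem_coe]
    have := add_mem (Kc.ball_mem u δ' w)
      (Kc.sq_mem u δ' (fun i => C (√(δ ^ 2 - δ' ^ 2)) * w i))
    convert this using 1
    funext i j
    simp only [Pi.add_apply]
    ring

lemma Qc.sq_mul {u : Rn n} {δ : ℝ} {h : MvPolynomial (Fin n) ℝ} (hh : h ∈ Qc u δ)
    (p : MvPolynomial (Fin n) ℝ) : p * p * h ∈ Qc u δ := by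
  induction hh using AddSubmonoid.closure_induction with
  | mem x hx =>
    rcases hx with ⟨q, rfl⟩ | ⟨q, rfl⟩
    · convert Qc.sq_mem u δ (p * q) using 1
      ring
    · convert Qc.ball_mem u δ (p * q) using 1
      ring
  | zero => simp
  | add x y _ _ hx hy =>
    rw [mul_add]
    exact add_mem hx hy

lemma Qc.C_mul {u : Rn n} {δ : ℝ} {h : MvPolynomial (Fin n) ℝ} (hh : h ∈ Qc u δ)
    {c : ℝ} (hc : 0 ≤ c) : C c * h ∈ Qc u δ := by
  rw [C_eq_sq hc]
  exact Qc.sq_mul hh _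

/-- from scalar to matrix quadratic module -/
lemma Qc.toKc {u : Rn n} {δ : ℝ} {h : MvPolynomial (Fin n) ℝ} (hh : h ∈ Qc u δ)
    (w : Fin n → MvPolynomial (Fin n) ℝ) : (fun i j => h * (w i * w j)) ∈ Kc u δ := by
  induction hh using AddSubmonoid.closure_induction with
  | mem x hx =>
    rcases hx with ⟨q, rfl⟩ | ⟨q, rfl⟩
    · convert Kc.sq_mem u δ (fun i => q * w i) using 3
      ring
    · convert Kc.ball_mem u δ (fun i => q * w i) using 3
      ring
  | zero =>
    convert (Kc u δ).zero_mem using 3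
    simp
  | add x y _ _ hx hy =>
    convert add_mem hx hy using 3
    simp only [Pi.add_apply]
    ring

/-- infinitesimal polynomials at `u` -/
def Infin (u : Rn n) (r : MvPolynomial (Fin n) ℝ) : Prop :=
  ∀ c > 0, ∃ δ > 0, C c + r ∈ Qc u δ ∧ C c - r ∈ Qc u δ

lemma Infin.zero (u : Rn n) : Infin u 0 := by
  intro c hc
  refine ⟨1, one_pos, ?_, ?_⟩ <;>
  · simp only [add_zero, sub_zero]
    rw [C_eq_sq hc.le]
    exact Qc.sq_mem _ _ _

lemma Infin.add {u : Rn n} {r s : MvPolynomial (Fin n) ℝ} (hr : Infin u r) (hs : Infin u s) :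
    Infin u (r + s) := by
  intro c hc
  obtain ⟨δ, hδ, h1, h2⟩ := hr (c / 2) (by positivity)
  obtain ⟨η, hη, h3, h4⟩ := hs (c / 2) (by positivity)
  have hm : 0 < min δ η := lt_min hδ hη
  have hcc : (C c : MvPolynomial (Fin n) ℝ) = C (c / 2) + C (c / 2) := by
    rw [← C_add]; congr 1; ring
  refine ⟨min δ η, hm, ?_, ?_⟩
  · convert add_mem (Qc.mono u hm.le (min_le_left _ _) h1)
      (Qc.mono u hm.le (min_le_right _ _) h3) using 1
    rw [hcc]; ring
  · convert add_mem (Qc.mono u hm.le (min_le_left _ _) h2)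
      (Qc.mono u hm.le (min_le_right _ _) h4) using 1
    rw [hcc]; ring

lemma Infin.neg {u : Rn n} {r : MvPolynomial (Fin n) ℝ} (hr : Infin u r) : Infin u (-r) := by
  intro c hc
  obtain ⟨δ, hδ, h1, h2⟩ := hr c hc
  refine ⟨δ, hδ, ?_, ?_⟩
  · convert h2 using 1
    ring
  · convert h1 using 1
    ring

lemma Infin.C_mul_nonneg {u : Rn n} {r : MvPolynomial (Fin n) ℝ} (hr : Infin u r) {k : ℝ}
    (hk : 0 < k) : Infin u (C k * r) := by
  intro c hc
  obtain ⟨δ, hδ, h1, h2⟩ := hr (c / k) (by positivity)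
  have hcc : (C c : MvPolynomial (Fin n) ℝ) = C k * C (c / k) := by
    rw [← MvPolynomial.C_mul]; congr 1; field_simp
  refine ⟨δ, hδ, ?_, ?_⟩
  · convert Qc.C_mul h1 hk.le using 1
    rw [hcc]; ring
  · convert Qc.C_mul h2 hk.le using 1
    rw [hcc]; ring

lemma Infin.C_mul {u : Rn n} {r : MvPolynomial (Fin n) ℝ} (hr : Infin u r) (k : ℝ) :
    Infin u (C k * r) := by
  rcases lt_trichotomy k 0 with h | h | h
  · have := (hr.C_mul_nonneg (neg_pos.mpr h)).neg
    simpa using this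
  · subst h
    simpa using Infin.zero u
  · exact hr.C_mul_nonneg h

lemma Infin.sq {u : Rn n} {r : MvPolynomial (Fin n) ℝ} (hr : Infin u r) : Infin u (r * r) := by
  intro c hc
  have hk : 0 < √c := Real.sqrt_pos.mpr hc
  obtain ⟨δ, hδ, h1, h2⟩ := hr (√c) hk
  refine ⟨δ, hδ, ?_, ?_⟩
  · rw [C_eq_sq hc.le]
    exact add_mem (Qc.sq_mem _ _ _) (Qc.sq_mem _ _ _)
  · have h3 := add_mem (Qc.sq_mul h1 (C (√c) - r)) (Qc.sq_mul h2 (C (√c) + r))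
    have h4 := Qc.C_mul h3 (c := (2 * √c)⁻¹) (by positivity)
    convert h4 using 1
    rw [C_eq_sq hc.le]
    have h5 : (C (2 * √c)⁻¹ : MvPolynomial (Fin n) ℝ) * (2 * C (√c)) = 1 := by
      rw [show (2 : MvPolynomial (Fin n) ℝ) = C 2 from rfl, ← MvPolynomial.C_mul,
        ← MvPolynomial.C_mul, inv_mul_cancel₀ (by positivity), C_1]
    linear_combination (-(C (√c) * C (√c) - r * r)) * h5

lemma Infin.mul {u : Rn n} {r s : MvPolynomial (Fin n) ℝ} (hr : Infin u r) (hs : Infin u s) :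
    Infin u (r * s) := by
  have h := ((hr.add hs).sq.C_mul (1 / 4)).add ((hr.add hs.neg).sq.C_mul (1 / 4)).neg
  convert h using 1
  have h4 : (C (1 / 4 : ℝ) : MvPolynomial (Fin n) ℝ) * 4 = 1 := by
    rw [show (4 : MvPolynomial (Fin n) ℝ) = C 4 from rfl, ← MvPolynomial.C_mul]
    norm_num
  linear_combination (-(r * s)) * h4

lemma Infin.X (u : Rn n) (i : Fin n) : Infin u (MvPolynomial.X i - C (u i)) := by
  classical
  intro c hc
  set x : Fin n → MvPolynomial (Fin n) ℝ := fun i => MvPolynomial.X i - C (u i) with hx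
  have key : C (c ^ 2) - x i * x i ∈ Qc u c := by
    have h1 : C (c ^ 2) - x i * x i = ballPoly u c * (1 * 1)
        + ∑ j ∈ Finset.univ.erase i, x j * x j := by
      rw [ballPoly, ← Finset.add_sum_erase _ _ (Finset.mem_univ i)]
      simp only [hx, pow_two]
      ring
    rw [h1]
    exact add_mem (Qc.ball_mem _ _ _) (sum_mem fun j _ => Qc.sq_mem _ _ _)
  have h5 : (C (2 * c)⁻¹ : MvPolynomial (Fin n) ℝ) * (2 * C c) = 1 := by
    rw [show (2 : MvPolynomial (Fin n) ℝ) = C 2 from rfl, ← MvPolynomial.C_mul,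
      ← MvPolynomial.C_mul, inv_mul_cancel₀ (by positivity), C_1]
  rw [C_pow] at key
  refine ⟨c, hc, ?_, ?_⟩
  · have := Qc.C_mul (add_mem key (Qc.sq_mem u c (C c + x i))) (c := (2 * c)⁻¹) (by positivity)
    convert this using 1
    linear_combination (-(C c + x i)) * h5
  · have := Qc.C_mul (add_mem key (Qc.sq_mem u c (C c - x i))) (c := (2 * c)⁻¹) (by positivity)
    convert this using 1
    linear_combination (-(C c - x i)) * h5

lemma infin_sub (u : Rn n) (p : MvPolynomial (Fin n) ℝ) : Infin u (p - C (peval p u)) := by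
  induction p using MvPolynomial.induction_on with
  | C a => simpa [peval] using Infin.zero u
  | add p q hp hq =>
    convert hp.add hq using 1
    simp only [peval, map_add]
    ring
  | mul_X p i hp =>
    convert ((hp.mul (Infin.X u i)).add ((Infin.X u i).C_mul (peval p u))).add
      (hp.C_mul (u i)) using 1
    simp only [peval, map_mul, eval_X]
    ring

/-- small perturbation of a multiple of the identity in one symmetric pair of entries -/
lemma Kc.pair (u : Rn n) (r : MvPolynomial (Fin n) ℝ) (hr : peval r u = 0) {ε : ℝ} (hε : 0 < ε)
    (a b : Fin n) : ∃ δ > 0, (fun i j => C ε * ((if i = b then 1 else 0) * (if j = b then 1 else 0))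
      + C ε * ((if i = a then 1 else 0) * (if j = a then 1 else 0))
      + r * ((if i = a then 1 else 0) * (if j = b then 1 else 0)
        + (if i = b then 1 else 0) * (if j = a then 1 else 0))) ∈ Kc u δ := by
  have hI : Infin u r := by simpa [hr] using infin_sub u r
  obtain ⟨δ, hδ, -, h2⟩ := hI.sq (ε ^ 2) (by positivity)
  refine ⟨δ, hδ, ?_⟩
  have h3 := Qc.toKc (Qc.C_mul h2 (c := ε⁻¹) (by positivity)) (fun i => if i = a then 1 else 0)
  have h4 := Kc.sq_mem u δ (fun i => C (√ε) * (if i = b then 1 else 0) +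
    C (√(ε⁻¹)) * r * (if i = a then 1 else 0))
  have h5 := add_mem h3 h4
  convert h5 using 1
  funext i j
  simp only [Pi.add_apply]
  have e1 : (C (√ε) : MvPolynomial (Fin n) ℝ) * C (√ε) = C ε := (C_eq_sq hε.le).symm
  have e2 : (C (√ε⁻¹) : MvPolynomial (Fin n) ℝ) * C (√ε⁻¹) = C ε⁻¹ :=
    (C_eq_sq (inv_nonneg.mpr hε.le)).symm
  have e3 : (C (√ε) : MvPolynomial (Fin n) ℝ) * C (√ε⁻¹) = 1 := by
    rw [← MvPolynomial.C_mul, ← Real.sqrt_mul hε.le, mul_inv_cancel₀ hε.ne']; simp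
  have e4 : (C ε⁻¹ : MvPolynomial (Fin n) ℝ) * C (ε ^ 2) = C ε := by
    rw [← MvPolynomial.C_mul]; congr 1; field_simp
  generalize (if i = a then (1 : MvPolynomial (Fin n) ℝ) else 0) = ia
  generalize (if j = a then (1 : MvPolynomial (Fin n) ℝ) else 0) = ja
  generalize (if i = b then (1 : MvPolynomial (Fin n) ℝ) else 0) = ib
  generalize (if j = b then (1 : MvPolynomial (Fin n) ℝ) else 0) = jb
  linear_combination (-(ib * jb)) * e1 - (r * r * ia * ja) * e2
    - (r * (ia * jb + ib * ja)) * e3 - ia * ja * e4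

end Quad


section Local
variable {n : ℕ}

lemma continuous_peval (g : MvPolynomial (Fin n) ℝ) : Continuous (peval g) := by
  unfold peval
  exact (MvPolynomial.continuous_eval g).comp (by fun_prop)

lemma exists_common {κ : Type} [Finite κ] {P : κ → ℝ → Prop}
    (mono : ∀ k δ δ', 0 < δ' → δ' ≤ δ → P k δ → P k δ')
    (h : ∀ k, ∃ δ > 0, P k δ) : ∃ δ > 0, ∀ k, P k δ := by
  have h1 : ∀ k, ∀ᶠ δ in nhdsWithin (0 : ℝ) (Ioi 0), P k δ := by
    intro k
    obtain ⟨δ, hδ, hP⟩ := h k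
    filter_upwards [Ioc_mem_nhdsGT hδ] with η hη
    exact mono k δ η hη.1 hη.2 hP
  obtain ⟨δ, hδ, hP⟩ := ((eventually_all.mpr h1).and self_mem_nhdsWithin).exists
  exact ⟨δ, hP, hδ⟩

/-- a compactness argument on the unit sphere -/
lemma quad_pos (G : Fin n → Fin n → ℝ) (hG : ∀ v ∈ sphere (0 : Rn n) 1,
    0 < ∑ i, ∑ j, v i * v j * G i j) :
    ∃ ε > 0, ∀ v : Fin n → ℝ, ε * ∑ i, v i * v i ≤ ∑ i, ∑ j, v i * v j * G i j := by
  obtain ⟨ε, hε, h⟩ := (isCompact_sphere (0 : Rn n) 1).exists_forall_le'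
    (f := fun v => ∑ i, ∑ j, v i * v j * G i j) (by fun_prop) hG
  refine ⟨ε, hε, fun v => ?_⟩
  set w : Rn n := WithLp.toLp 2 v with hw
  have hnorm : ‖w‖ ^ 2 = ∑ i, v i * v i := by
    rw [EuclideanSpace.norm_sq_eq]
    simp [hw, pow_two]
  by_cases h0 : w = 0
  · have hv : ∀ i, v i = 0 := by
      intro i
      have : w i = 0 := by rw [h0]; rfl
      exact this
    simp [hv]
  · have hpos : 0 < ‖w‖ := norm_pos_iff.mpr h0
    have h1 := h (‖w‖⁻¹ • w) (by simp [norm_smul, hpos.ne'])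
    have h2 : ∑ i, ∑ j, (‖w‖⁻¹ • w) i * (‖w‖⁻¹ • w) j * G i j
        = (‖w‖ ^ 2)⁻¹ * ∑ i, ∑ j, v i * v j * G i j := by
      simp only [Finset.mul_sum]
      refine Finset.sum_congr rfl fun i _ => Finset.sum_congr rfl fun j _ => ?_
      simp only [PiLp.smul_apply, smul_eq_mul, hw]
      ring
    rw [h2, ← div_eq_inv_mul, le_div_iff₀ (by positivity), hnorm] at h1
    exact h1

lemma quad_lower (G : Fin n → Fin n → ℝ) (hG : ∀ v : Fin n → ℝ, v ≠ 0 →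
    0 < ∑ i, ∑ j, v i * v j * G i j) :
    ∃ ε > 0, ∀ v : Fin n → ℝ, ε * ∑ i, v i * v i ≤ ∑ i, ∑ j, v i * v j * G i j := by
  refine quad_pos G fun v hv => hG (fun i => v i) fun h0 => ?_
  have : v = 0 := by
    ext i
    exact congrFun h0 i
  simp [this] at hv

lemma finsler (G : Fin n → Fin n → ℝ) (l : Fin n → ℝ) (hG : ∀ v : Fin n → ℝ, v ≠ 0 →
    ∑ i, l i * v i = 0 → 0 < ∑ i, ∑ j, v i * v j * G i j) :
    ∃ M : ℝ, ∀ v : Fin n → ℝ, v ≠ 0 → 0 < ∑ i, ∑ j, v i * v j * (G i j + M * (l i * l j)) := by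
  have expand : ∀ (M : ℝ) (v : Fin n → ℝ), ∑ i, ∑ j, v i * v j * (G i j + M * (l i * l j))
      = ∑ i, ∑ j, v i * v j * G i j + M * ((∑ i, l i * v i) * (∑ i, l i * v i)) := by
    intro M v
    rw [Finset.sum_mul_sum, Finset.mul_sum, ← Finset.sum_add_distrib]
    refine Finset.sum_congr rfl fun i _ => ?_
    rw [Finset.mul_sum, ← Finset.sum_add_distrib]
    refine Finset.sum_congr rfl fun j _ => ?_
    ring
  obtain ⟨M, hM⟩ := (isCompact_sphere (0 : Rn n) 1).elim_directed_cover
    (fun M : ℕ => {v : Rn n | 0 < ∑ i, ∑ j, v i * v j * G i j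
      + (M : ℝ) * ((∑ i, l i * v i) * (∑ i, l i * v i))})
    (fun M => isOpen_lt (by fun_prop) (by fun_prop))
    (by
      intro v hv
      rw [mem_iUnion]
      by_cases h0 : ∑ i, l i * v i = 0
      · refine ⟨0, ?_⟩
        have := hG (fun i => v i) (fun hz => by
          have : v = 0 := by
            ext i
            exact congrFun hz i
          simp [this] at hv) h0
        simpa using this
      · have hp : 0 < (∑ i, l i * v i) * (∑ i, l i * v i) := mul_self_pos.mpr h0
        obtain ⟨M, hM⟩ := exists_nat_gt ((-∑ i, ∑ j, v i * v j * G i j) /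
          ((∑ i, l i * v i) * (∑ i, l i * v i)))
        refine ⟨M, ?_⟩
        rw [div_lt_iff₀ hp] at hM
        rw [mem_ofPred_eq]
        linarith)
    (by
      refine Monotone.directed_le fun M N hMN v hv => ?_
      rw [mem_ofPred_eq] at hv ⊢
      have h1 : (M : ℝ) ≤ N := by exact_mod_cast hMN
      have := mul_le_mul_of_nonneg_right h1 (mul_self_nonneg (∑ i, l i * v i))
      linarith)
  obtain ⟨ε, hε, h⟩ := quad_pos (fun i j => G i j + M * (l i * l j)) (by
    intro v hv
    have := hM hv
    rw [mem_ofPred_eq] at this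
    rw [expand]
    exact this)
  refine ⟨M, fun v hv => lt_of_lt_of_le ?_ (h v)⟩
  refine mul_pos hε ?_
  obtain ⟨i, hi⟩ := Function.ne_iff.mp hv
  exact Finset.sum_pos' (fun i _ => mul_self_nonneg _) ⟨i, Finset.mem_univ _, mul_self_pos.mpr hi⟩

lemma pderiv_comm' (i j : Fin n) (g : MvPolynomial (Fin n) ℝ) :
    pderiv i (pderiv j g) = pderiv j (pderiv i g) := by
  have : ⁅(pderiv i : Derivation ℝ (MvPolynomial (Fin n) ℝ) (MvPolynomial (Fin n) ℝ)),
      (pderiv j : Derivation ℝ (MvPolynomial (Fin n) ℝ) (MvPolynomial (Fin n) ℝ))⁆ = 0 := by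
    apply MvPolynomial.derivation_ext
    intro k
    rw [Derivation.commutator_apply, pderiv_X, pderiv_X]
    simp only [Pi.single_apply]
    split_ifs <;> simp
  have h2 := congrArg (fun D => D g) this
  simp only [Derivation.commutator_apply] at h2
  exact sub_eq_zero.mp h2

open scoped MatrixOrder in
lemma Kc.const (u : Rn n) (δ : ℝ) (G : Matrix (Fin n) (Fin n) ℝ) (hG : G.PosSemidef) :
    (fun i j => (C (G i j) : MvPolynomial (Fin n) ℝ)) ∈ Kc u δ := by
  obtain ⟨B, hB⟩ := CStarAlgebra.nonneg_iff_eq_star_mul_self.mp hG.nonneg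
  have : (fun i j => (C (G i j) : MvPolynomial (Fin n) ℝ)) =
      ∑ k, fun i j => C (B k i) * C (B k j) := by
    funext i j
    rw [hB]
    simp [Matrix.mul_apply, Matrix.star_apply]
  rw [this]
  exact sum_mem fun k _ => Kc.sq_mem u δ (fun i => C (B k i))

lemma Kc.of_posDef (u : Rn n) (H : Fin n → Fin n → MvPolynomial (Fin n) ℝ)
    (hs : ∀ i j, H i j = H j i)
    (hpos : ∀ v : Fin n → ℝ, v ≠ 0 → 0 < ∑ i, ∑ j, v i * v j * peval (H i j) u) :
    ∃ δ > 0, H ∈ Kc u δ := by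
  obtain ⟨ε, hε, hlow⟩ := quad_lower _ hpos
  set η : ℝ := ε / (2 * n + 1) with hη
  have hη0 : 0 < η := by positivity
  have hηn : 2 * n * η ≤ ε := by
    rw [hη, mul_div_assoc', div_le_iff₀ (by positivity)]
    nlinarith
  set r : Fin n → Fin n → MvPolynomial (Fin n) ℝ :=
    fun a b => C (1 / 2) * (H a b - C (peval (H a b) u)) with hr
  have hr0 : ∀ a b, peval (r a b) u = 0 := by
    intro a b
    simp [hr, peval]
  obtain ⟨δ, hδ, hK⟩ := exists_common (κ := Fin n × Fin n) (P := fun ab δ =>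
    (fun i j => C η * ((if i = ab.2 then 1 else 0) * (if j = ab.2 then 1 else 0))
      + C η * ((if i = ab.1 then 1 else 0) * (if j = ab.1 then 1 else 0))
      + r ab.1 ab.2 * ((if i = ab.1 then 1 else 0) * (if j = ab.2 then 1 else 0)
        + (if i = ab.2 then 1 else 0) * (if j = ab.1 then 1 else 0))) ∈ Kc u δ)
    (fun k δ δ' h0 h1 hP => Kc.mono u h0.le h1 hP)
    (fun ab => Kc.pair u _ (hr0 _ _) hη0 _ _)
  refine ⟨δ, hδ, ?_⟩
  have hsum := sum_mem (S := Kc u δ) (t := Finset.univ) fun ab _ => hK ab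
  have hconst : (fun i j => (C (peval (H i j) u - (if i = j then 2 * n * η else 0)) :
      MvPolynomial (Fin n) ℝ)) ∈ Kc u δ := by
    refine Kc.const u δ (Matrix.of fun i j => peval (H i j) u - (if i = j then 2 * n * η else 0)) ?_
    refine Matrix.PosSemidef.of_dotProduct_mulVec_nonneg ?_ fun v => ?_
    · ext i j
      simp [Matrix.conjTranspose_apply, hs i j, eq_comm]
    · have e : star v ⬝ᵥ (Matrix.of fun i j => peval (H i j) u -
          (if i = j then 2 * n * η else 0)).mulVec v
          = ∑ i, ∑ j, v i * v j * peval (H i j) u - 2 * n * η * ∑ i, v i * v i := by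
        simp only [dotProduct, Matrix.mulVec, Matrix.of_apply, Finset.mul_sum]
        rw [← Finset.sum_sub_distrib]
        refine Finset.sum_congr rfl fun i _ => ?_
        simp only [sub_mul, mul_sub, Finset.sum_sub_distrib, ite_mul, zero_mul, mul_ite, mul_zero,
          Finset.sum_ite_eq, Finset.mem_univ, if_true, star_trivial]
        congr 1
        · refine Finset.sum_congr rfl fun j _ => by ring
        · ring
      rw [e]
      have h1 : 0 ≤ ∑ i, v i * v i := Finset.sum_nonneg fun i _ => mul_self_nonneg _
      have := mul_le_mul_of_nonneg_right hηn h1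
      linarith [hlow v]
  have := add_mem hsum hconst
  convert this using 1
  funext i j
  simp only [Pi.add_apply, Finset.sum_apply, Finset.sum_add_distrib, Fintype.sum_prod_type,
    mul_add, mul_ite, mul_one, mul_zero, ite_mul, zero_mul, one_mul]
  have h2 : (C (1 / 2 : ℝ) : MvPolynomial (Fin n) ℝ) * 2 = 1 := by
    rw [show (2 : MvPolynomial (Fin n) ℝ) = C 2 from rfl, ← MvPolynomial.C_mul]
    norm_num
  have h3 : r j i = r i j := by simp only [hr, hs i j]
  have h4 : 2 * r i j = H i j - C (peval (H i j) u) := by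
    rw [hr]
    linear_combination (H i j - C (peval (H i j) u)) * h2
  by_cases hij : i = j
  · subst hij
    simp
    rw [show (C 2 : MvPolynomial (Fin n) ℝ) = 2 from rfl]
    linear_combination -h4
  · simp [hij, Ne.symm hij]
    rw [h3]
    linear_combination -h4

lemma local_cert (u : Rn n) (g : MvPolynomial (Fin n) ℝ) (hg : peval g u = 0)
    (hq : ∀ v : Fin n → ℝ, v ≠ 0 → ∑ i, pgrad g u i * v i = 0 →
      0 < -(∑ i, ∑ j, v i * phess g u i j * v j)) :
    ∃ δ > 0, ∃ f, (fun i j => -pderiv i (pderiv j f)) ∈ Kc u δ ∧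
      ∀ x ∈ closedBall u δ, (0 ≤ peval f x ↔ 0 ≤ peval g x) := by
  obtain ⟨M, hM⟩ := finsler (fun i j => -phess g u i j) (pgrad g u) (by
    intro v hv h0
    have := hq v hv h0
    simp only [← Finset.sum_neg_distrib] at this
    refine lt_of_lt_of_eq this ?_
    refine Finset.sum_congr rfl fun i _ => Finset.sum_congr rfl fun j _ => by ring)
  set f : MvPolynomial (Fin n) ℝ := g - C (M / 2) * (g * g) with hf
  have h2 : (C (M / 2) : MvPolynomial (Fin n) ℝ) * 2 = C M := by
    rw [show (2 : MvPolynomial (Fin n) ℝ) = C 2 from rfl, ← MvPolynomial.C_mul]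
    congr 1
    ring
  have hd1 : ∀ j, pderiv j f = pderiv j g - C M * (g * pderiv j g) := by
    intro j
    simp only [hf, map_sub, Derivation.leibniz, pderiv_C, smul_eq_mul, mul_zero, add_zero]
    linear_combination (-(g * pderiv j g)) * h2
  have hd2 : ∀ i j, pderiv i (pderiv j f) = pderiv i (pderiv j g)
      - C M * (g * pderiv i (pderiv j g) + pderiv j g * pderiv i g) := by
    intro i j
    rw [hd1]
    simp only [map_sub, Derivation.leibniz, pderiv_C, smul_eq_mul, mul_zero, add_zero]
  obtain ⟨δ, hδ, hK⟩ := Kc.of_posDef u (fun i j => -pderiv i (pderiv j f))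
    (fun i j => by rw [pderiv_comm']) (by
      intro v hv
      refine lt_of_lt_of_eq (hM v hv) ?_
      refine Finset.sum_congr rfl fun i _ => Finset.sum_congr rfl fun j _ => ?_
      have hg' : eval (fun i => u i) g = 0 := hg
      simp only [hd2, peval, map_neg, map_sub, map_add, map_mul, eval_C, hg', phess, pgrad,
        Matrix.of_apply]
      ring)
  have hopen : IsOpen {x : Rn n | 0 < 1 - M / 2 * peval g x} :=
    isOpen_lt continuous_const (by have := continuous_peval g; fun_prop)
  obtain ⟨ρ, hρ, hsub⟩ := Metric.nhds_basis_closedBall.mem_iff.mp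
    (hopen.mem_nhds (show u ∈ {x : Rn n | 0 < 1 - M / 2 * peval g x} by simp [hg]))
  refine ⟨min δ ρ, lt_min hδ hρ, f, Kc.mono u (lt_min hδ hρ).le (min_le_left _ _) hK, ?_⟩
  intro x hx
  have hx1 : 0 < 1 - M / 2 * peval g x :=
    hsub (closedBall_subset_closedBall (min_le_right _ _) hx)
  have : peval f x = (1 - M / 2 * peval g x) * peval g x := by
    simp only [hf, peval, map_sub, map_mul, eval_C]
    ring
  rw [this, mul_nonneg_iff_of_pos_left hx1]

end Local
/-! ### The moment relaxation -/

section Moment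
variable {n : ℕ}

/-- substitution of `a + t (X - a)` -/
def sb (a : Fin n → ℝ) (t : ℝ) : MvPolynomial (Fin n) ℝ →ₐ[ℝ] MvPolynomial (Fin n) ℝ :=
  aeval (fun i => C (a i) + C t * (X i - C (a i)))

lemma sb_X (a : Fin n → ℝ) (t : ℝ) (i : Fin n) :
    sb a t (X i) = C (a i) + C t * (X i - C (a i)) := by
  simp [sb]

lemma sb_C (a : Fin n → ℝ) (t : ℝ) (c : ℝ) : sb a t (C c) = C c := by
  simp [sb]

lemma sb_zero (a : Fin n → ℝ) (p : MvPolynomial (Fin n) ℝ) : sb a 0 p = C (eval a p) := by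
  induction p using MvPolynomial.induction_on with
  | C c => simp [sb_C]
  | add p q hp hq => simp [hp, hq]
  | mul_X p i hp => simp [hp, sb_X]

lemma sb_one (a : Fin n → ℝ) (p : MvPolynomial (Fin n) ℝ) : sb a 1 p = p := by
  induction p using MvPolynomial.induction_on with
  | C c => simp [sb_C]
  | add p q hp hq => simp [hp, hq]
  | mul_X p i hp => simp [hp, sb_X]

lemma sb_degree (p : MvPolynomial (Fin n) ℝ) : ∃ D, ∀ a t, (sb a t p).totalDegree ≤ D := by
  induction p using MvPolynomial.induction_on with
  | C c => exact ⟨0, fun a t => by simp [sb_C]⟩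
  | add p q hp hq =>
    obtain ⟨D, hD⟩ := hp
    obtain ⟨E, hE⟩ := hq
    refine ⟨max D E, fun a t => ?_⟩
    rw [map_add]
    exact (totalDegree_add _ _).trans (max_le_max (hD a t) (hE a t))
  | mul_X p i hp =>
    obtain ⟨D, hD⟩ := hp
    refine ⟨D + 1, fun a t => ?_⟩
    rw [map_mul, sb_X]
    refine (totalDegree_mul _ _).trans (add_le_add (hD a t) ?_)
    refine (totalDegree_add _ _).trans (max_le (by simp) ?_)
    refine (totalDegree_mul _ _).trans ?_
    rw [totalDegree_C, zero_add]
    refine (totalDegree_sub _ _).trans (max_le ?_ (by simp))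
    rw [totalDegree_X]

lemma dual_C_mul (L : Module.Dual ℝ (MvPolynomial (Fin n) ℝ)) (c : ℝ)
    (p : MvPolynomial (Fin n) ℝ) : L (C c * p) = c * L p := by
  rw [C_mul', map_smul, smul_eq_mul]

lemma hd_congr {f g : ℝ → ℝ} {a b t : ℝ} (h : HasDerivAt f a t) (e : g = f) (e2 : b = a) :
    HasDerivAt g b t := by
  rw [e, e2]
  exact h

lemma sb_hasDerivAt (L : Module.Dual ℝ (MvPolynomial (Fin n) ℝ)) (a : Fin n → ℝ)
    (g : MvPolynomial (Fin n) ℝ) : ∀ (q : MvPolynomial (Fin n) ℝ) (t : ℝ),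
    HasDerivAt (fun t => L (q * sb a t g))
      (L (q * ∑ i, sb a t (pderiv i g) * (X i - C (a i)))) t := by
  induction g using MvPolynomial.induction_on with
  | C c =>
    intro q t
    simp only [sb_C, pderiv_C, map_zero, zero_mul, Finset.sum_const_zero, mul_zero]
    exact hasDerivAt_const _ _
  | add p r hp hr =>
    intro q t
    have := (hp q t).add (hr q t)
    refine hd_congr this ?_ ?_
    · funext s
      simp [mul_add]
    · simp [mul_add, add_mul, Finset.sum_add_distrib]
  | mul_X p j hp =>
    intro q t
    have h1 := (hp q t).const_mul (a j)
    have h2 := (hasDerivAt_id t).mul (hp (q * (X j - C (a j))) t)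
    have := h1.add h2
    refine hd_congr this ?_ ?_
    · funext s
      simp only [map_mul, sb_X, Pi.add_apply, Pi.mul_apply, id]
      rw [← dual_C_mul, ← dual_C_mul, ← map_add]
      congr 1
      ring
    · simp only [id, one_mul]
      rw [← dual_C_mul, ← dual_C_mul, ← map_add, ← map_add]
      congr 1
      have : ∀ i, sb a t (pderiv i (p * X j)) * (X i - C (a i)) =
          (sb a t (pderiv i p) * (X i - C (a i))) * (C (a j) + C t * (X j - C (a j)))
          + sb a t p * (if i = j then (X i - C (a i)) else 0) := by
        intro i
        rw [Derivation.leibniz, pderiv_X]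
        by_cases hij : i = j
        · subst hij
          simp [sb_X]
          ring
        · simp [hij, sb_X, Pi.single_apply, Ne.symm hij]
          ring
      simp only [this, Finset.sum_add_distrib, ← Finset.mul_sum, ← Finset.sum_mul]
      simp
      ring

/-- truncated positivity of a functional -/
def PosL (u : Rn n) (δ : ℝ) (D : ℕ) (L : Module.Dual ℝ (MvPolynomial (Fin n) ℝ)) : Prop :=
  ∀ p : MvPolynomial (Fin n) ℝ, p.totalDegree ≤ D →
    0 ≤ L (p * p) ∧ 0 ≤ L (ballPoly u δ * (p * p))

lemma PosL.mono {u : Rn n} {δ : ℝ} {D E : ℕ} {L : Module.Dual ℝ (MvPolynomial (Fin n) ℝ)}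
    (h : PosL u δ E L) (hDE : D ≤ E) : PosL u δ D L :=
  fun p hp => h p (hp.trans hDE)

lemma sb_ball (u : Rn n) (δ : ℝ) (a : Fin n → ℝ) (t : ℝ) :
    sb a t (ballPoly u δ) = C ((1 - t) * eval a (ballPoly u δ)) + C t * ballPoly u δ
      + ∑ i, C (t * (1 - t)) * ((X i - C (a i)) * (X i - C (a i))) := by
  simp only [ballPoly, map_sub, map_sum, map_pow, sb_X, sb_C, eval_X, eval_C, C_mul, C_sub, C_1,
    mul_sub, Finset.mul_sum]
  rw [sub_eq_iff_eq_add]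
  have : ∀ i, ((C (a i) : MvPolynomial (Fin n) ℝ) + C t * (X i - C (a i)) - C (u i)) ^ 2
      = (1 - C t) * (C (a i) - C (u i)) ^ 2 + C t * (X i - C (u i)) ^ 2
        - C t * (1 - C t) * ((X i - C (a i)) * (X i - C (a i))) := by
    intro i; ring
  simp only [mul_sub, ← mul_sub] at this ⊢
  simp only [this, Finset.sum_add_distrib, Finset.sum_sub_distrib, ← Finset.mul_sum]
  ring

lemma Kc.nonneg {u : Rn n} {δ : ℝ} {H : Fin n → Fin n → MvPolynomial (Fin n) ℝ}
    (hH : H ∈ Kc u δ) : ∃ D, ∀ L, PosL u δ D L → ∀ a : Fin n → ℝ, 0 ≤ eval a (ballPoly u δ) →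
      ∀ t : ℝ, 0 ≤ t → t ≤ 1 →
      0 ≤ L (∑ i, ∑ j, sb a t (H i j) * ((X i - C (a i)) * (X j - C (a j)))) := by
  have hdeg : ∀ w : Fin n → MvPolynomial (Fin n) ℝ, ∃ D, ∀ a t,
      (∑ i, sb a t (w i) * (X i - C (a i))).totalDegree ≤ D := by
    intro w
    choose E hE using fun i => sb_degree (w i)
    refine ⟨∑ i, (E i + 1), fun a t => ?_⟩
    refine (totalDegree_finsetSum _ _).trans (Finset.sup_le fun i hi => ?_)
    refine le_trans ?_ (Finset.single_le_sum (f := fun i => E i + 1)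
      (fun i _ => Nat.zero_le _) (Finset.mem_univ i))
    refine (totalDegree_mul _ _).trans (add_le_add (hE i a t) ?_)
    refine (totalDegree_sub _ _).trans (max_le ?_ (by simp))
    rw [totalDegree_X]
  have hsq : ∀ (w : Fin n → MvPolynomial (Fin n) ℝ) (a : Fin n → ℝ) (t : ℝ),
      ∑ i, ∑ j, sb a t (w i * w j) * ((X i - C (a i)) * (X j - C (a j)))
      = (∑ i, sb a t (w i) * (X i - C (a i))) * (∑ i, sb a t (w i) * (X i - C (a i))) := by
    intro w a t
    rw [Finset.sum_mul_sum]
    refine Finset.sum_congr rfl fun i _ => Finset.sum_congr rfl fun j _ => ?_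
    rw [map_mul]
    ring
  induction hH using AddSubmonoid.closure_induction with
  | mem x hx =>
    rcases hx with ⟨w, rfl⟩ | ⟨w, rfl⟩
    · obtain ⟨D, hD⟩ := hdeg w
      refine ⟨D, fun L hL a ha t ht ht1 => ?_⟩
      rw [hsq]
      exact (hL _ (hD a t)).1
    · obtain ⟨D, hD⟩ := hdeg w
      refine ⟨D + 1, fun L hL a ha t ht ht1 => ?_⟩
      have h1 : ∑ i, ∑ j, sb a t (ballPoly u δ * (w i * w j)) *
          ((X i - C (a i)) * (X j - C (a j)))
          = sb a t (ballPoly u δ) * ∑ i, ∑ j, sb a t (w i * w j) *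
            ((X i - C (a i)) * (X j - C (a j))) := by
        simp only [Finset.mul_sum]
        refine Finset.sum_congr rfl fun i _ => Finset.sum_congr rfl fun j _ => ?_
        rw [map_mul]
        ring
      rw [h1, hsq, sb_ball]
      have hq := hD a t
      generalize (∑ i, sb a t (w i) * (X i - C (a i))) = q at hq ⊢
      rw [add_mul, add_mul, Finset.sum_mul, map_add, map_add, map_sum, mul_assoc (C t),
        dual_C_mul, dual_C_mul]
      have hq1 := hL q (hq.trans (Nat.le_succ _))
      refine add_nonneg (add_nonneg (mul_nonneg (mul_nonneg (by linarith) ha) hq1.1)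
        (mul_nonneg ht hq1.2)) (Finset.sum_nonneg fun i _ => ?_)
      rw [mul_assoc, dual_C_mul]
      refine mul_nonneg (mul_nonneg ht (by linarith)) ?_
      have hq2 := (hL (q * (X i - C (a i))) ?_).1
      · have e : (X i - C (a i)) * (X i - C (a i)) * (q * q) = q * (X i - C (a i)) * (q * (X i - C (a i))) := by
          ring
        rw [e]
        exact hq2
      · refine (totalDegree_mul _ _).trans (add_le_add hq ?_)
        refine (totalDegree_sub _ _).trans (max_le ?_ (by simp))
        rw [totalDegree_X]
  | zero => exact ⟨0, fun L hL a ha t ht ht1 => by simp⟩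
  | add x y _ _ hx hy =>
    obtain ⟨D, hD⟩ := hx
    obtain ⟨E, hE⟩ := hy
    refine ⟨max D E, fun L hL a ha t ht ht1 => ?_⟩
    have := add_nonneg (hD L (hL.mono (le_max_left _ _)) a ha t ht ht1)
      (hE L (hL.mono (le_max_right _ _)) a ha t ht ht1)
    rw [← map_add, ← Finset.sum_add_distrib] at this
    simp only [← Finset.sum_add_distrib, ← add_mul, ← map_add] at this
    exact this

/-- The Jensen inequality for the truncated functional. -/
lemma jensen {u : Rn n} {δ : ℝ} {f : MvPolynomial (Fin n) ℝ}
    (hf : (fun i j => -pderiv i (pderiv j f)) ∈ Kc u δ) :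
    ∃ D, ∀ L, PosL u δ D L → ∀ a : Fin n → ℝ, L 1 = 1 → (∀ i, L (X i) = a i) →
      0 ≤ eval a (ballPoly u δ) ∧ L f ≤ eval a f := by
  obtain ⟨D, hD⟩ := Kc.nonneg hf
  refine ⟨D + 1, fun L hL a h1 hX => ?_⟩
  have hC : ∀ c, L (C c) = c := by
    intro c
    have := dual_C_mul L c 1
    rwa [mul_one, h1, mul_one] at this
  have hv : ∀ i, L (X i - C (a i)) = 0 := by
    intro i
    rw [map_sub, hC, hX, sub_self]
  have hball : 0 ≤ eval a (ballPoly u δ) := by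
    have h2 := (hL 1 (by simp)).2
    rw [mul_one, mul_one] at h2
    have h3 : ∀ i, (a i - u i) ^ 2 ≤ L ((X i - C (u i)) ^ 2) := by
      intro i
      have h4 := (hL (X i - C (a i)) ?_).1
      · have h5 : (X i - C (u i)) ^ 2 = (X i - C (a i)) * (X i - C (a i))
            + C (2 * (a i - u i)) * (X i - C (a i)) + C ((a i - u i) ^ 2) := by
          simp only [C_mul, C_pow, C_sub]
          rw [show (C 2 : MvPolynomial (Fin n) ℝ) = 2 from rfl]
          ring
        rw [h5, map_add, map_add, dual_C_mul, hv, hC]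
        linarith
      · refine (totalDegree_sub _ _).trans (max_le ?_ (by simp))
        rw [totalDegree_X]
        omega
    have h6 := Finset.sum_le_sum fun i (_ : i ∈ Finset.univ) => h3 i
    rw [ballPoly, map_sub, hC, map_sum] at h2
    rw [ballPoly]
    simp only [map_sub, map_sum, map_pow, eval_X, eval_C]
    linarith
  refine ⟨hball, ?_⟩
  set φ : ℝ → ℝ := fun t => L (1 * sb a t f) with hφ
  set ψ : ℝ → ℝ := fun t => L (1 * ∑ i, sb a t (pderiv i f) * (X i - C (a i))) with hψ
  set χ : ℝ → ℝ := fun t => ∑ i, L ((X i - C (a i)) *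
    ∑ j, sb a t (pderiv j (pderiv i f)) * (X j - C (a j))) with hχ
  have d1 : ∀ t, HasDerivAt φ (ψ t) t := fun t => sb_hasDerivAt L a f 1 t
  have d2 : ∀ t, HasDerivAt ψ (χ t) t := by
    intro t
    have := HasDerivAt.fun_sum fun i (_ : i ∈ Finset.univ) =>
      sb_hasDerivAt L a (pderiv i f) (X i - C (a i)) t
    refine hd_congr this ?_ rfl
    funext s
    rw [hψ]
    simp only [one_mul, map_sum]
    refine Finset.sum_congr rfl fun i _ => ?_
    rw [mul_comm]
  have d3 : ∀ t, 0 ≤ t → t ≤ 1 → χ t ≤ 0 := by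
    intro t ht ht1
    have := hD L (hL.mono (Nat.le_succ _)) a hball t ht ht1
    have heq : L (∑ i, ∑ j, sb a t (-pderiv i (pderiv j f)) *
        ((X i - C (a i)) * (X j - C (a j)))) = - χ t := by
      rw [hχ]
      simp only
      rw [← map_sum, ← map_neg, Finset.sum_comm]
      congr 1
      rw [← Finset.sum_neg_distrib]
      refine Finset.sum_congr rfl fun i _ => ?_
      rw [Finset.mul_sum, ← Finset.sum_neg_distrib]
      refine Finset.sum_congr rfl fun j _ => ?_
      rw [map_neg]
      ring
    linarith
  have hψ0 : ψ 0 = 0 := by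
    rw [hψ]
    simp only [one_mul, sb_zero, map_sum, dual_C_mul, hv, mul_zero, Finset.sum_const_zero]
  have hanti : AntitoneOn ψ (Icc 0 1) := by
    refine antitoneOn_of_deriv_nonpos (convex_Icc 0 1)
      (fun t _ => (d2 t).continuousAt.continuousWithinAt)
      (fun t _ => (d2 t).differentiableAt.differentiableWithinAt) fun t ht => ?_
    have ht' := interior_subset ht
    rw [(d2 t).deriv]
    exact d3 t ht'.1 ht'.2
  have hanti2 : AntitoneOn φ (Icc 0 1) := by
    refine antitoneOn_of_deriv_nonpos (convex_Icc 0 1)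
      (fun t _ => (d1 t).continuousAt.continuousWithinAt)
      (fun t _ => (d1 t).differentiableAt.differentiableWithinAt) fun t ht => ?_
    have ht' := interior_subset ht
    rw [(d1 t).deriv, ← hψ0]
    exact hanti (by simp) ht' ht'.1
  have := hanti2 (by simp : (0 : ℝ) ∈ Icc (0 : ℝ) 1) (by simp : (1 : ℝ) ∈ Icc (0 : ℝ) 1) zero_le_one
  rw [hφ] at this
  simp only [one_mul, sb_zero, sb_one, hC] at this
  exact this

lemma LMI.squares (D : ℕ) : LMI {L : Module.Dual ℝ (MvPolynomial (Fin n) ℝ) |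
    ∀ p : MvPolynomial (Fin n) ℝ, p.totalDegree ≤ D → 0 ≤ L (p * p)} := by
  let b := Module.finBasis ℝ (restrictTotalDegree (Fin n) ℝ D)
  refine ⟨Fin _, inferInstance,
    { toFun := fun L => Matrix.of fun i j => L ((b i : MvPolynomial (Fin n) ℝ) * b j)
      map_add' := by intros; ext; simp
      map_smul' := by intros; ext; simp }, ?_⟩
  have key : ∀ (L : Module.Dual ℝ (MvPolynomial (Fin n) ℝ))
      (w : Fin (Module.finrank ℝ (restrictTotalDegree (Fin n) ℝ D)) → ℝ),
      ∑ i, ∑ j, w i * w j * L ((b i : MvPolynomial (Fin n) ℝ) * b j)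
      = L ((∑ i, w i • (b i : MvPolynomial (Fin n) ℝ)) *
          (∑ i, w i • (b i : MvPolynomial (Fin n) ℝ))) := by
    intro L w
    rw [Finset.sum_mul_sum, map_sum]
    refine Finset.sum_congr rfl fun i _ => ?_
    rw [map_sum]
    refine Finset.sum_congr rfl fun j _ => ?_
    rw [smul_mul_smul_comm, map_smul, smul_eq_mul]
  ext L
  simp only [mem_ofPred_eq, LinearMap.coe_mk, AddHom.coe_mk, Matrix.of_apply, key]
  constructor
  · intro h w
    apply h
    rw [← mem_restrictTotalDegree]
    exact Submodule.sum_mem _ fun i _ => Submodule.smul_mem _ _ (b i).2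
  · intro h p hp
    rw [← mem_restrictTotalDegree] at hp
    have := congrArg Subtype.val (b.sum_repr ⟨p, hp⟩)
    rw [Submodule.coe_sum] at this
    simp only [Submodule.coe_smul] at this
    rw [← this]
    exact h _

lemma eval_ball (u x : Rn n) {δ : ℝ} (hδ : 0 ≤ δ) :
    0 ≤ eval (fun i => x i) (ballPoly u δ) ↔ x ∈ closedBall u δ := by
  rw [mem_closedBall, EuclideanSpace.dist_eq, Real.sqrt_le_left hδ]
  simp only [ballPoly, map_sub, map_sum, map_pow, eval_X, eval_C, Real.dist_eq, sq_abs]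
  exact sub_nonneg

lemma lift_moment {u : Rn n} {δ : ℝ} (hδ : 0 ≤ δ) {f : MvPolynomial (Fin n) ℝ}
    (hf : (fun i j => -pderiv i (pderiv j f)) ∈ Kc u δ) :
    Lift {x : Rn n | 0 ≤ peval f x ∧ x ∈ closedBall u δ} := by
  obtain ⟨D, hD⟩ := jensen hf
  let V := Module.Dual ℝ (MvPolynomial (Fin n) ℝ)
  let π : (ℝ × Rn n × V) →ₗ[ℝ] V :=
    (LinearMap.snd ℝ (Rn n) V).comp (LinearMap.snd ℝ ℝ (Rn n × V))
  let ρ : (ℝ × Rn n × V) →ₗ[ℝ] Rn n :=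
    (LinearMap.fst ℝ (Rn n) V).comp (LinearMap.snd ℝ ℝ (Rn n × V))
  let ev : MvPolynomial (Fin n) ℝ → V →ₗ[ℝ] ℝ := fun p => LinearMap.applyₗ p
  let mb : V →ₗ[ℝ] V := (LinearMap.mulLeft ℝ (ballPoly u δ)).dualMap
  have c1 := LMI.ker ((ev 1).comp π - LinearMap.fst ℝ ℝ (Rn n × V))
  have c2 := LMI.iInter (fun i : Fin n => LMI.ker ((ev (X i)).comp π -
    ((EuclideanSpace.proj i : Rn n →L[ℝ] ℝ) : Rn n →ₗ[ℝ] ℝ).comp ρ))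
  have c3 := (LMI.squares (n := n) D).comap π
  have c4 := (LMI.squares (n := n) D).comap (mb.comp π)
  have c5 := LMI.ray ((ev f).comp π)
  refine ⟨V, inferInstance, inferInstance, _,
    (c1.inter c2).inter ((c3.inter c4).inter c5), ?_⟩
  ext x
  constructor
  · rintro ⟨hfx, hx⟩
    rw [← eval_ball u x hδ] at hx
    refine ⟨(aeval (fun i => x i) : MvPolynomial (Fin n) ℝ →ₐ[ℝ] ℝ).toLinearMap,
      ⟨?_, ?_⟩, ⟨?_, ?_⟩, ?_⟩
    · change (aeval (fun i => x i) : MvPolynomial (Fin n) ℝ →ₐ[ℝ] ℝ) 1 - 1 = 0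
      simp
    · refine mem_iInter.mpr fun i => ?_
      change (aeval (fun i => x i) : MvPolynomial (Fin n) ℝ →ₐ[ℝ] ℝ) (X i) - x i = 0
      simp
    · intro p _
      change 0 ≤ (aeval (fun i => x i) : MvPolynomial (Fin n) ℝ →ₐ[ℝ] ℝ) (p * p)
      rw [map_mul]
      exact mul_self_nonneg _
    · intro p _
      change 0 ≤ (aeval (fun i => x i) : MvPolynomial (Fin n) ℝ →ₐ[ℝ] ℝ) (ballPoly u δ * (p * p))
      rw [map_mul, map_mul]
      exact mul_nonneg hx (mul_self_nonneg _)
    · change 0 ≤ (aeval (fun i => x i) : MvPolynomial (Fin n) ℝ →ₐ[ℝ] ℝ) f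
      exact hfx
  · rintro ⟨L, ⟨h1, h2⟩, ⟨h3, h4⟩, h5⟩
    have hL1 : L 1 = 1 := by
      have : L 1 - 1 = 0 := h1
      linarith
    have hLX : ∀ i, L (X i) = x i := by
      intro i
      have : L (X i) - x i = 0 := mem_iInter.mp h2 i
      linarith
    have := hD L (fun p hp => ⟨h3 p hp, h4 p hp⟩) (fun i => x i) hL1 hLX
    refine ⟨le_trans h5 this.2, (eval_ball u x hδ).mp this.1⟩

end Moment


section Final
variable {n : ℕ}

lemma piece_of_cert {u : Rn n} {δ : ℝ} (hδ : 0 < δ) {f g : MvPolynomial (Fin n) ℝ}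
    (hf : (fun i j => -pderiv i (pderiv j f)) ∈ Kc u δ)
    (hfg : ∀ x ∈ closedBall u δ, (0 ≤ peval f x ↔ 0 ≤ peval g x)) :
    ∃ δ > 0, ∃ C, Lift C ∧ C ⊆ {x | 0 ≤ peval g x} ∧
      closedBall u δ ∩ {x | 0 ≤ peval g x} ⊆ C :=
  ⟨δ, hδ, _, lift_moment hδ.le hf, fun x hx => (hfg x hx.2).mp hx.1,
    fun x hx => ⟨(hfg x hx.1).mpr hx.2, hx.1⟩⟩

lemma piece (u : Rn n) (g : MvPolynomial (Fin n) ℝ) (hu : 0 ≤ peval g u)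
    (h : peval g u = 0 → SosConcave g ∨ StrictlyQuasiConcaveAt g u) :
    ∃ δ > 0, ∃ C, Lift C ∧ C ⊆ {x | 0 ≤ peval g x} ∧
      closedBall u δ ∩ {x | 0 ≤ peval g x} ⊆ C := by
  rcases hu.eq_or_lt with h0 | hpos
  · rcases h h0.symm with ⟨k, W, hW⟩ | hq
    · refine piece_of_cert (f := g) one_pos ?_ fun _ _ => Iff.rfl
      have : (fun i j => -pderiv i (pderiv j g)) = ∑ l, fun i j => W l i * W l j := by
        funext i j
        simp [hW]
      rw [this]
      exact sum_mem fun l _ => Kc.sq_mem u 1 (W l)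
    · have hq' : ∀ v : Fin n → ℝ, v ≠ 0 → ∑ i, pgrad g u i * v i = 0 →
          0 < -(∑ i, ∑ j, v i * phess g u i j * v j) := by
        rcases hq with ⟨-, hq⟩ | ⟨-, hq⟩
        · exact hq
        · intro v hv _
          have := hq.dotProduct_mulVec_pos hv
          refine lt_of_lt_of_eq this ?_
          simp only [dotProduct, Matrix.mulVec, Matrix.neg_apply, Finset.mul_sum,
            ← Finset.sum_neg_distrib, Pi.star_apply, star_trivial]
          refine Finset.sum_congr rfl fun i _ => Finset.sum_congr rfl fun j _ => by ring
      obtain ⟨δ, hδ, f, hf, hfg⟩ := local_cert u g h0.symm hq'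
      exact piece_of_cert hδ hf hfg
  · have hopen : IsOpen {x : Rn n | 0 < peval g x} :=
      isOpen_lt continuous_const (continuous_peval g)
    obtain ⟨ρ, hρ, hsub⟩ := Metric.nhds_basis_closedBall.mem_iff.mp (hopen.mem_nhds hpos)
    refine piece_of_cert (f := 0) hρ ?_ fun x hx => ?_
    · convert (Kc u ρ).zero_mem using 1
      funext i j
      simp
    · have : 0 < peval g x := hsub hx
      simp [peval] at this ⊢
      exact this.le

lemma local_T (u : Rn n) {r : ℕ} (g : Fin r → MvPolynomial (Fin n) ℝ)
    (h : ∀ i, peval (g i) u = 0 → SosConcave (g i) ∨ StrictlyQuasiConcaveAt (g i) u) :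
    ∃ δ > 0, ∃ C, Lift C ∧ C ⊆ {x | ∀ i, 0 ≤ peval (g i) x} ∧
      closedBall u δ ∩ {x | ∀ i, 0 ≤ peval (g i) x} ⊆ C := by
  by_cases hu : u ∈ {x | ∀ i, 0 ≤ peval (g i) x}
  · obtain ⟨δ, hδ, hP⟩ := exists_common (κ := Fin r) (P := fun i δ => ∃ C, Lift C ∧
      C ⊆ {x | 0 ≤ peval (g i) x} ∧ closedBall u δ ∩ {x | 0 ≤ peval (g i) x} ⊆ C)
      (fun i δ δ' _ hle ⟨C, h1, h2, h3⟩ => ⟨C, h1, h2, fun x hx =>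
        h3 ⟨closedBall_subset_closedBall hle hx.1, hx.2⟩⟩)
      (fun i => piece u (g i) (hu i) (h i))
    choose C h1 h2 h3 using hP
    refine ⟨δ, hδ, ⋂ i, C i, Lift.iInter h1, fun x hx i => h2 i (mem_iInter.mp hx i),
      fun x hx => mem_iInter.mpr fun i => h3 i ⟨hx.1, hx.2 i⟩⟩
  · have hcl : IsClosed {x : Rn n | ∀ i, 0 ≤ peval (g i) x} := by
      have : {x : Rn n | ∀ i, 0 ≤ peval (g i) x} = ⋂ i, {x | 0 ≤ peval (g i) x} := by
        ext x
        simp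
      rw [this]
      exact isClosed_iInter fun i => isClosed_le continuous_const (continuous_peval _)
    obtain ⟨ρ, hρ, hsub⟩ := Metric.nhds_basis_closedBall.mem_iff.mp
      (hcl.isOpen_compl.mem_nhds hu)
    exact ⟨ρ, hρ, ∅, Lift.empty, empty_subset _, fun x hx => absurd hx.2 (hsub hx.1)⟩

/-- every ray from a point of a bounded set meets the frontier -/
lemma ray_frontier {S : Set (Rn n)} (hb : Bornology.IsBounded S) {x e : Rn n} (hx : x ∈ S)
    (he : e ≠ 0) : ∃ t : ℝ, 0 ≤ t ∧ x + t • e ∈ frontier S := by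
  set R : Set (Rn n) := (fun t : ℝ => x + t • e) '' Ici 0 with hR
  have hpre : IsPreconnected R := isPreconnected_Ici.image _ (by fun_prop)
  have h1 : (R ∩ S).Nonempty := ⟨x, ⟨0, by simp, by simp⟩, hx⟩
  have h2 : (R ∩ Sᶜ).Nonempty := by
    obtain ⟨B, hB⟩ := hb.exists_norm_le
    have hpos : 0 < ‖e‖ := norm_pos_iff.mpr he
    have hB0 : 0 ≤ B := (norm_nonneg x).trans (hB x hx)
    refine ⟨x + ((B + ‖x‖ + 1) / ‖e‖) • e, ⟨_, ?_, rfl⟩, fun hmem => ?_⟩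
    · rw [mem_Ici]
      positivity
    · have h3 := hB _ hmem
      have h4 : ‖((B + ‖x‖ + 1) / ‖e‖) • e‖ = B + ‖x‖ + 1 := by
        rw [norm_smul, Real.norm_of_nonneg (by positivity)]
        field_simp
      have h5 := norm_sub_le (x + ((B + ‖x‖ + 1) / ‖e‖) • e) x
      rw [add_sub_cancel_left, h4] at h5
      linarith
  by_contra hcon
  have hR1 : ∀ y ∈ R, y ∉ frontier S := by
    rintro y ⟨t, ht, rfl⟩ hy
    exact hcon ⟨t, ht, hy⟩
  have hR2 : ∀ y ∈ R, y ∈ closure S → y ∈ interior S := by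
    intro y hy hc
    by_contra hi
    exact hR1 y hy ⟨hc, hi⟩
  obtain ⟨a, ha, haS⟩ := h1
  obtain ⟨b, hbR, hbS⟩ := h2
  obtain ⟨z, -, hz1, hz2⟩ := hpre (interior S) (closure S)ᶜ isOpen_interior
    isClosed_closure.isOpen_compl (fun y hy => by
      by_cases hc : y ∈ closure S
      · exact Or.inl (hR2 y hy hc)
      · exact Or.inr hc)
    ⟨a, ha, hR2 a ha (subset_closure haS)⟩
    ⟨b, hbR, fun hc => hbS (interior_subset (hR2 b hbR hc))⟩
  exact hz2 (subset_closure (interior_subset hz1))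

lemma subset_of_frontier_subset {S C : Set (Rn n)} (hb : Bornology.IsBounded S)
    (hC : Convex ℝ C) {e : Rn n} (he : e ≠ 0) (hfr : frontier S ⊆ C) : S ⊆ C := by
  intro x hx
  obtain ⟨s, hs, h1⟩ := ray_frontier hb hx he
  obtain ⟨t, ht, h2⟩ := ray_frontier hb hx (neg_ne_zero.mpr he)
  rcases (add_nonneg hs ht).eq_or_lt with h0 | hpos
  · have : s = 0 := by linarith
    subst this
    simpa using hfr h1
  · have := hC (hfr h1) (hfr h2) (a := t / (s + t)) (b := s / (s + t)) (by positivity)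
      (by positivity) (by field_simp; ring)
    convert this using 1
    have e1 : t / (s + t) + s / (s + t) = 1 := by field_simp; ring
    have e2 : t / (s + t) * s = s / (s + t) * t := by ring
    rw [smul_add, smul_add, smul_smul, smul_smul, smul_neg, e2]
    rw [show (t / (s + t)) • x + (s / (s + t) * t) • e +
      ((s / (s + t)) • x + -((s / (s + t) * t) • e)) = (t / (s + t)) • x + (s / (s + t)) • x by abel,
      ← add_smul, e1, one_smul]

end Final

/-- sufficient conditions for SDP representability of a compact convex
set `S = ⋃ₖ Tₖ` which is a union of basic closed semialgebraic sets. -/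
theorem isSDPRepresentable_union_of_sosConcave_or_strictlyQuasiConcave {n m : ℕ}
    (mk : Fin m → ℕ) (g : ∀ k, Fin (mk k) → MvPolynomial (Fin n) ℝ)
    (T : Fin m → Set (Rn n))
    (hT : ∀ k, T k = {x : Rn n | ∀ i, 0 ≤ peval (g k i) x})
    (S : Set (Rn n)) (hS : S = ⋃ k, T k)
    (hcpt : IsCompact S) (hconv : Convex ℝ S)
    (h : ∀ u ∈ frontier S, ∀ (k : Fin m) (i : Fin (mk k)), peval (g k i) u = 0 →
      (∀ δ > 0, ∃ v ∈ ball u δ, ∀ j, 0 < peval (g k j) v) ∧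
      (SosConcave (g k i) ∨ StrictlyQuasiConcaveAt (g k i) u)) :
    IsSDPRepresentable S := by
  apply Lift.isSDPRepresentable
  have hb := hcpt.isBounded
  have hfc : IsCompact (frontier S) :=
    hcpt.of_isClosed_subset isClosed_frontier hcpt.isClosed.frontier_subset
  have hTS : ∀ k, T k ⊆ S := fun k => by
    rw [hS]
    exact subset_iUnion T k
  obtain ⟨C, hC, hCS, hfr⟩ : ∃ C, Lift C ∧ C ⊆ S ∧ frontier S ∩ S ⊆ C := by
    refine hfc.induction_on (p := fun s => ∃ C, Lift C ∧ C ⊆ S ∧ s ∩ S ⊆ C) ?_ ?_ ?_ ?_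
    · exact ⟨∅, Lift.empty, empty_subset _, by simp⟩
    · rintro s t hst ⟨C, h1, h2, h3⟩
      exact ⟨C, h1, h2, (inter_subset_inter_left _ hst).trans h3⟩
    · rintro s t ⟨C, h1, h2, h3⟩ ⟨D, h4, h5, h6⟩
      obtain ⟨E, h7, h8, h9⟩ := h1.hull h4 h2 h5 hb hconv
      refine ⟨E, h7, h8, ?_⟩
      rw [union_inter_distrib_right]
      exact (union_subset_union h3 h6).trans h9
    · intro u hu
      obtain ⟨δ, hδ, hP⟩ := exists_common (κ := Fin m) (P := fun k δ => ∃ C, Lift C ∧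
        C ⊆ T k ∧ closedBall u δ ∩ T k ⊆ C)
        (fun k δ δ' _ hle ⟨C, h1, h2, h3⟩ => ⟨C, h1, h2, fun x hx =>
          h3 ⟨closedBall_subset_closedBall hle hx.1, hx.2⟩⟩)
        (fun k => by
          rw [hT k]
          exact local_T u (g k) fun i hi => (h u hu k i hi).2)
      choose P h1 h2 h3 using hP
      obtain ⟨D, h4, h5, h6⟩ := Lift.iUnion h1 (fun k => (h2 k).trans (hTS k)) hb hconv
      refine ⟨closedBall u δ, mem_nhdsWithin_of_mem_nhds (closedBall_mem_nhds u hδ), D, h4, h5, ?_⟩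
      rintro x ⟨hx1, hx2⟩
      rw [hS, mem_iUnion] at hx2
      obtain ⟨k, hk⟩ := hx2
      exact h6 k (h3 k ⟨hx1, hk⟩)
  have hfr' : frontier S ⊆ C := fun x hx => hfr ⟨hx, hcpt.isClosed.frontier_subset hx⟩
  by_cases hn : ∃ e : Rn n, e ≠ 0
  · obtain ⟨e, he⟩ := hn
    rw [(subset_of_frontier_subset hb hC.convex he hfr').antisymm hCS]
    exact hC
  · push Not at hn
    rcases S.eq_empty_or_nonempty with h0 | ⟨x, hx⟩
    · rw [h0]
      exact Lift.empty
    · have : S = Set.univ := by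
        refine eq_univ_of_forall fun y => ?_
        rw [hn y, ← hn x]
        exact hx
      rw [this]
      exact Lift.univ
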